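/- arXiv:1411.7467 — 2 statements merged into one kernel-verified Lean document; each statement's English description precedes it below -/
import Mathlib

section
/- For every half-integer γ ≥ 1/2, every j ∈ {−1/2, 0, 1/2, 1, …} and every μ ∈ {−γ, −γ+1, …, γ}, the vector ψ_(μ) ∈ F_γ ⊗ D⁺_j is nonzero, satisfies 𝒥₋ψ_(μ) = 0 (it is a lowest weight vector), satisfies 𝒥₀ψ_(μ) = (j+1+μ)ψ_(μ), and is an eigenvector of the Casimir 𝒬 with eigenvalue q_(μ) = −(j+μ)(j+μ+1). -/
/-!
The key observation is that the formulas for `J0`, `Jp`, `Jm` on the vectors `eV G i k c` hold for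
*all* integers `i`, `k`: where a ladder operator would re-enter the allowed range from outside, its
coefficient vanishes (`Cp γ (-γ-1) = Cp j j = Cm γ (γ+1) = 0`). Hence no boundary cases occur in the
computation of the commutator `𝒥₋𝒥₊ - 𝒥₊𝒥₋ = 2𝒥₀` (`Jm_Jp_eV`).

The coefficients of `ψ` satisfy `c (s+1) * C₊(γ, s-γ) = -c s * C₊(j, j+t-s)`, and
`C₋(a, b+1) = C₊(a, b)`; this makes the sum for `𝒥₋ψ` telescope to zero. The weight equation holds
termwise. Then `𝒥₋𝒥₊ψ = 2𝒥₀ψ`, so `𝒬ψ = (-λ(λ+1) + 2λ)ψ = -λ(λ-1)ψ` with `λ = j+1+μ`. Finally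
`ψ ≠ 0` because its coefficient at `s = 0` is `1`.
-/

/-!
Statement 0: lowest weight vectors ψ_(μ) in the coupling F_γ ⊗ D⁺_j for sl(2,ℝ).

Conventions: γ = G/2 with `G : ℕ`, `1 ≤ G`; j = (K-1)/2 with `K : ℕ` (so j ∈ {-1/2,0,1/2,...}).
The space F_γ ⊗ D⁺_j has basis indexed by `(ν, k) : Fin (G+1) × ℕ`, the basis vector
`single (ν,k) 1` representing |γ, ν-γ⟩ ⊗ |j, j+1+k⟩.
-/

noncomputable section

/-- Principal branch of the complex square root. -/
def csqrt (z : ℂ) : ℂ := z ^ ((1 : ℂ) / 2)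

/-- C₊(j,m) = i √(j-m) √(j+m+1). -/
def Cp (j m : ℂ) : ℂ := Complex.I * csqrt (j - m) * csqrt (j + m + 1)

/-- C₋(j,m) = i √(j+m) √(j-m+1). -/
def Cm (j m : ℂ) : ℂ := Complex.I * csqrt (j + m) * csqrt (j - m + 1)

/-- γ = G/2, as a complex number. -/
def gam (G : ℕ) : ℂ := (G : ℂ) / 2

/-- j = (K-1)/2, as a complex number. -/
def jd (K : ℕ) : ℂ := ((K : ℂ) - 1) / 2

/-- μ = ν - γ for ν : Fin (G+1). -/
def muc (G : ℕ) (ν : Fin (G + 1)) : ℂ := ((ν : ℕ) : ℂ) - gam G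

/-- m = j + 1 + k for k : ℕ. -/
def md (K : ℕ) (k : ℕ) : ℂ := jd K + 1 + (k : ℂ)

/-- The vector space F_γ ⊗ D⁺_j. -/
abbrev W (G : ℕ) := (Fin (G + 1) × ℕ) →₀ ℂ

/-- Basis vector with coefficient, with out-of-range indices giving 0. -/
def eV (G : ℕ) (i k : ℤ) (c : ℂ) : W G :=
  if h : 0 ≤ i ∧ i < (G : ℤ) + 1 ∧ 0 ≤ k then
    Finsupp.single ((⟨i.toNat, by omega⟩ : Fin (G + 1)), k.toNat) c
  else 0

/-- 𝒥₀ = J₀ ⊗ 1 + 1 ⊗ J₀. -/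
def J0 (G K : ℕ) : W G →ₗ[ℂ] W G :=
  Finsupp.lsum ℂ fun p => LinearMap.toSpanSingleton ℂ (W G)
    (Finsupp.single p (muc G p.1 + md K p.2))

/-- 𝒥₊ = J₊ ⊗ 1 + 1 ⊗ J₊. -/
def Jp (G K : ℕ) : W G →ₗ[ℂ] W G :=
  Finsupp.lsum ℂ fun p => LinearMap.toSpanSingleton ℂ (W G)
    (eV G ((p.1 : ℕ) + 1) (p.2 : ℕ) (Cp (gam G) (muc G p.1)) +
      eV G (p.1 : ℕ) ((p.2 : ℕ) + 1) (Cp (jd K) (md K p.2)))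

/-- 𝒥₋ = J₋ ⊗ 1 + 1 ⊗ J₋. -/
def Jm (G K : ℕ) : W G →ₗ[ℂ] W G :=
  Finsupp.lsum ℂ fun p => LinearMap.toSpanSingleton ℂ (W G)
    (eV G ((p.1 : ℕ) - 1) (p.2 : ℕ) (Cm (gam G) (muc G p.1)) +
      eV G (p.1 : ℕ) ((p.2 : ℕ) - 1) (Cm (jd K) (md K p.2)))

/-- The Casimir 𝒬 = -𝒥₀(𝒥₀+1) + 𝒥₋𝒥₊. -/
def Qcas (G K : ℕ) : W G →ₗ[ℂ] W G :=
  -(J0 G K ∘ₗ (J0 G K + LinearMap.id)) + Jm G K ∘ₗ Jp G K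

/-- The lowest weight vector ψ_(μ), μ = t - γ:
ψ_(μ) = Σ_{ν=-γ}^{μ} (-1)^{γ+ν} (Π_{σ=-γ}^{ν-1} C₊(j, j+μ-σ)/C₊(γ,σ)) |γ,ν⟩ ⊗ |j, j+1+μ-ν⟩. -/
def psiLW (G K : ℕ) (t : Fin (G + 1)) : W G :=
  ∑ s ∈ Finset.range (t.1 + 1),
    eV G (s : ℤ) ((t.1 : ℤ) - (s : ℤ))
      ((-1 : ℂ) ^ s *
        ∏ r ∈ Finset.range s,
          Cp (jd K) (jd K + ((t.1 : ℕ) : ℂ) - (r : ℂ)) / Cp (gam G) ((r : ℂ) - gam G))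

/-- q_(μ) = -(j+μ)(j+μ+1). -/
def qe (G K : ℕ) (t : Fin (G + 1)) : ℂ :=
  -((jd K + muc G t) * (jd K + muc G t + 1))

lemma csqrt_zero : csqrt 0 = 0 := by
  simp [csqrt]

lemma csqrt_mul_self (z : ℂ) : csqrt z * csqrt z = z := by
  have h := Complex.cpow_nat_inv_pow z (n := 2) (by norm_num)
  rw [pow_two] at h
  simpa [csqrt] using h

lemma csqrt_ne_zero {z : ℂ} (hz : z ≠ 0) : csqrt z ≠ 0 := by
  intro h
  apply hz
  rw [← csqrt_mul_self z, h, zero_mul]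

lemma Cm_eq_Cp (a b : ℂ) : Cm a b = Cp a (b - 1) := by
  unfold Cm Cp
  rw [show a - (b - 1) = a - b + 1 by ring, show a + (b - 1) + 1 = a + b by ring]
  ring

lemma Cp_mul_self (a b : ℂ) : Cp a b * Cp a b = -((a - b) * (a + b + 1)) := by
  unfold Cp
  calc _ = Complex.I * Complex.I * (csqrt (a - b) * csqrt (a - b)) *
        (csqrt (a + b + 1) * csqrt (a + b + 1)) := by ring
    _ = _ := by rw [csqrt_mul_self, csqrt_mul_self, Complex.I_mul_I]; ring

lemma eV_add (G : ℕ) (i k : ℤ) (c d : ℂ) : eV G i k (c + d) = eV G i k c + eV G i k d := by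
  unfold eV
  split_ifs <;> simp

lemma eV_smul (G : ℕ) (i k : ℤ) (c d : ℂ) : c • eV G i k d = eV G i k (c * d) := by
  unfold eV
  split_ifs <;> simp

lemma eV_zero (G : ℕ) (i k : ℤ) : eV G i k 0 = 0 := by
  unfold eV
  split_ifs <;> simp

lemma eV_out (G : ℕ) (i k : ℤ) (c : ℂ) (h : ¬ (0 ≤ i ∧ i < (G : ℤ) + 1 ∧ 0 ≤ k)) :
    eV G i k c = 0 := dif_neg h

lemma eV_in (G : ℕ) (a : Fin (G + 1)) (n : ℕ) (c : ℂ) :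
    eV G (a : ℕ) n c = Finsupp.single (a, n) c := by
  unfold eV
  rw [dif_pos ⟨by omega, by omega, by omega⟩]
  rfl

/-- An in-range pair of integer labels comes from an index of the basis. -/
lemma exists_index (G : ℕ) (i k : ℤ) (h : 0 ≤ i ∧ i < (G : ℤ) + 1 ∧ 0 ≤ k) :
    ∃ (a : Fin (G + 1)) (n : ℕ), i = (a : ℕ) ∧ k = n :=
  ⟨⟨i.toNat, by omega⟩, k.toNat, by simp; omega, by omega⟩

lemma J0_eV (G K : ℕ) (i k : ℤ) (c : ℂ) :
    J0 G K (eV G i k c) = eV G i k (c * ((i - gam G) + (jd K + 1 + k))) := by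
  by_cases h : 0 ≤ i ∧ i < (G : ℤ) + 1 ∧ 0 ≤ k
  · obtain ⟨a, n, rfl, rfl⟩ := exists_index G i k h
    rw [eV_in, eV_in]
    simp [J0, muc, md, -Finsupp.single_add, -Finsupp.single_sub, -Finsupp.single_mul]
  · rw [eV_out _ _ _ _ h, eV_out _ _ _ _ h, map_zero]

lemma Jp_eV (G K : ℕ) (i k : ℤ) (c : ℂ) :
    Jp G K (eV G i k c) = eV G (i + 1) k (c * Cp (gam G) (i - gam G)) +
      eV G i (k + 1) (c * Cp (jd K) (jd K + 1 + k)) := by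
  by_cases h : 0 ≤ i ∧ i < (G : ℤ) + 1 ∧ 0 ≤ k
  · obtain ⟨a, n, rfl, rfl⟩ := exists_index G i k h
    rw [eV_in]
    simp [Jp, muc, md, eV_smul]
  · rw [eV_out _ _ _ _ h, map_zero]
    have h1 : eV G (i + 1) k (c * Cp (gam G) (i - gam G)) = 0 := by
      -- only `i = -1` can be raised into the range
      by_cases hi : i = -1
      · subst hi
        have : gam G + (((-1 : ℤ) : ℂ) - gam G) + 1 = 0 := by push_cast; ring
        rw [Cp, this, csqrt_zero, mul_zero, mul_zero, eV_zero]
      · exact eV_out _ _ _ _ (by omega)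
    have h2 : eV G i (k + 1) (c * Cp (jd K) (jd K + 1 + k)) = 0 := by
      by_cases hk : k = -1
      · subst hk
        have : jd K - (jd K + 1 + ((-1 : ℤ) : ℂ)) = 0 := by push_cast; ring
        rw [Cp, this, csqrt_zero, mul_zero, zero_mul, mul_zero, eV_zero]
      · exact eV_out _ _ _ _ (by omega)
    rw [h1, h2, add_zero]

/-- The action of `𝒥₋`, with `C₋(a, b)` written as `C₊(a, b-1)`. -/
lemma Jm_eV (G K : ℕ) (i k : ℤ) (c : ℂ) :
    Jm G K (eV G i k c) = eV G (i - 1) k (c * Cp (gam G) (i - 1 - gam G)) +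
      eV G i (k - 1) (c * Cp (jd K) (jd K + k)) := by
  by_cases h : 0 ≤ i ∧ i < (G : ℤ) + 1 ∧ 0 ≤ k
  · obtain ⟨a, n, rfl, rfl⟩ := exists_index G i k h
    rw [eV_in]
    have e1 : Cm (gam G) (muc G a) = Cp (gam G) (((a : ℕ) : ℂ) - 1 - gam G) := by
      rw [Cm_eq_Cp, muc]; congr 1; ring
    have e2 : Cm (jd K) (md K n) = Cp (jd K) (jd K + n) := by
      rw [Cm_eq_Cp, md]; congr 1; ring
    simp [Jm, e1, e2, eV_smul]
  · rw [eV_out _ _ _ _ h, map_zero, eV_out G i (k - 1) _ (by omega), add_zero]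
    -- only `i = G + 1` can be lowered into the range
    by_cases hi : i = G + 1
    · subst hi
      have : gam G - ((((G : ℤ) + 1 : ℤ) : ℂ) - 1 - gam G) = 0 := by
        unfold gam; push_cast; ring
      rw [Cp, this, csqrt_zero, mul_zero, zero_mul, mul_zero, eV_zero]
    · exact (eV_out _ _ _ _ (by omega)).symm

/-- The commutation relation `𝒥₋𝒥₊ = 𝒥₊𝒥₋ + 2𝒥₀` on basis vectors. -/
lemma Jm_Jp_eV (G K : ℕ) (i k : ℤ) (c : ℂ) :
    Jm G K (Jp G K (eV G i k c)) =
      Jp G K (Jm G K (eV G i k c)) + (2 : ℂ) • J0 G K (eV G i k c) := by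
  simp only [Jp_eV, Jm_eV, J0_eV, map_add, eV_smul, add_sub_cancel_right, sub_add_cancel]
  push_cast
  set g := gam G
  set j := jd K
  rw [show (i : ℂ) + 1 - 1 - g = i - g by ring, show j + ((k : ℂ) + 1) = j + 1 + k by ring,
    show j + 1 + ((k : ℂ) - 1) = j + k by ring]
  -- the four cross terms agree in pairs; the diagonal ones are compared through `Cp_mul_self`
  have key : c * Cp g (i - g) * Cp g (i - g) + c * Cp j (j + 1 + k) * Cp j (j + 1 + k) =
      c * Cp g (i - 1 - g) * Cp g (i - 1 - g) + c * Cp j (j + k) * Cp j (j + k) +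
        2 * (c * (i - g + (j + 1 + k))) := by
    simp only [mul_assoc, Cp_mul_self]
    ring
  have key' := congrArg (eV G i k) key
  simp only [eV_add] at key'
  rw [mul_right_comm c (Cp g (i - 1 - g)) (Cp j (j + 1 + k)),
    mul_right_comm c (Cp j (j + k)) (Cp g (i - g))]
  rw [← sub_eq_zero] at key' ⊢
  rw [← key']
  abel

/-- The coefficient of `ψ` at `|γ, s-γ⟩ ⊗ |j, j+1+t-s⟩`. -/
def psiCoeff (G K t s : ℕ) : ℂ :=
  (-1 : ℂ) ^ s * ∏ r ∈ Finset.range s,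
    Cp (jd K) (jd K + (t : ℂ) - (r : ℂ)) / Cp (gam G) ((r : ℂ) - gam G)

lemma psiLW_eq (G K : ℕ) (t : Fin (G + 1)) :
    psiLW G K t = ∑ s ∈ Finset.range (t.1 + 1),
      eV G (s : ℤ) ((t.1 : ℤ) - (s : ℤ)) (psiCoeff G K t s) := rfl

lemma Cp_gam_ne_zero (G s : ℕ) (hs : s < G) : Cp (gam G) ((s : ℂ) - gam G) ≠ 0 := by
  unfold Cp
  refine mul_ne_zero (mul_ne_zero Complex.I_ne_zero (csqrt_ne_zero ?_)) (csqrt_ne_zero ?_)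
  · rw [show gam G - ((s : ℂ) - gam G) = (G : ℂ) - s by unfold gam; ring, sub_ne_zero]
    exact_mod_cast hs.ne'
  · rw [show gam G + ((s : ℂ) - gam G) + 1 = ((s + 1 : ℕ) : ℂ) by push_cast; ring]
    exact_mod_cast s.succ_ne_zero

lemma psiCoeff_succ (G K t s : ℕ) (hs : s < G) :
    psiCoeff G K t (s + 1) * Cp (gam G) ((s : ℂ) - gam G) =
      -(psiCoeff G K t s * Cp (jd K) (jd K + t - s)) := by
  have := Cp_gam_ne_zero G s hs
  unfold psiCoeff
  rw [Finset.prod_range_succ, pow_succ]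
  field_simp

lemma psiLW_ne_zero (G K : ℕ) (t : Fin (G + 1)) : psiLW G K t ≠ 0 := by
  intro h
  have h1 : psiLW G K t (0, t.1) = 1 := by
    rw [psiLW_eq, Finsupp.finsetSum_apply, Finset.sum_eq_single 0]
    · have := eV_in G 0 t.1 (psiCoeff G K t 0)
      rw [Fin.val_zero] at this
      rw [Nat.cast_zero, sub_zero, ← Nat.cast_zero, this]
      simp [psiCoeff]
    · intro s hs hs0
      rw [Finset.mem_range] at hs
      obtain ⟨a, n, ha, hn⟩ := exists_index G s ((t.1 : ℤ) - s) (by omega)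
      rw [hn, ha, eV_in, Finsupp.single_apply, if_neg]
      intro hp
      simp only [Prod.mk.injEq] at hp
      rw [hp.1] at ha
      simp at ha
      exact hs0 ha
    · simp
  rw [h] at h1
  simp at h1

lemma Jm_psiLW (G K : ℕ) (t : Fin (G + 1)) : Jm G K (psiLW G K t) = 0 := by
  rw [psiLW_eq, map_sum]
  simp only [Jm_eV]
  -- the `J₋ ⊗ 1` part loses its `s = 0` term, the `1 ⊗ J₋` part its `s = t` term
  rw [Finset.sum_add_distrib, Finset.sum_range_succ', Finset.sum_range_succ _ t.1,
    eV_out G (((0 : ℕ) : ℤ) - 1) _ _ (by omega), eV_out G (t.1 : ℤ) _ _ (by omega),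
    add_zero, add_zero, ← Finset.sum_add_distrib]
  refine Finset.sum_eq_zero fun s hs => ?_
  rw [Finset.mem_range] at hs
  have e1 : (((s + 1 : ℕ) : ℤ) : ℂ) - 1 - gam G = (s : ℂ) - gam G := by push_cast; ring
  have e2 : jd K + (((t.1 : ℤ) - (s : ℤ) : ℤ) : ℂ) = jd K + (t.1 : ℂ) - s := by push_cast; ring
  rw [e1, e2, psiCoeff_succ G K t s (by omega),
    show ((s + 1 : ℕ) : ℤ) - 1 = s by omega,
    show (t.1 : ℤ) - ((s + 1 : ℕ) : ℤ) = (t.1 : ℤ) - s - 1 by omega,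
    ← eV_add, neg_add_cancel, eV_zero]

lemma J0_psiLW (G K : ℕ) (t : Fin (G + 1)) :
    J0 G K (psiLW G K t) = (jd K + 1 + muc G t) • psiLW G K t := by
  rw [psiLW_eq, map_sum, Finset.smul_sum]
  refine Finset.sum_congr rfl fun s _ => ?_
  rw [J0_eV, eV_smul]
  congr 1
  unfold muc
  push_cast
  ring

lemma Jm_Jp_psiLW (G K : ℕ) (t : Fin (G + 1)) :
    Jm G K (Jp G K (psiLW G K t)) = (2 : ℂ) • J0 G K (psiLW G K t) := by
  have h : Jm G K (Jp G K (psiLW G K t)) =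
      Jp G K (Jm G K (psiLW G K t)) + (2 : ℂ) • J0 G K (psiLW G K t) := by
    rw [psiLW_eq]
    simp only [map_sum, Finset.smul_sum, ← Finset.sum_add_distrib]
    exact Finset.sum_congr rfl fun s _ => Jm_Jp_eV G K _ _ _
  rw [h, Jm_psiLW, map_zero, zero_add]

/-- Each ψ_(μ) is nonzero, is a lowest weight vector, is a 𝒥₀-eigenvector of
eigenvalue j+1+μ, and a 𝒬-eigenvector of eigenvalue q_(μ) = -(j+μ)(j+μ+1). -/
theorem psiLW_lowest_weight (G K : ℕ) (hG : 1 ≤ G) (t : Fin (G + 1)) :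
    psiLW G K t ≠ 0 ∧
    Jm G K (psiLW G K t) = 0 ∧
    J0 G K (psiLW G K t) = (jd K + 1 + muc G t) • psiLW G K t ∧
    Qcas G K (psiLW G K t) = qe G K t • psiLW G K t := by
  refine ⟨psiLW_ne_zero G K t, Jm_psiLW G K t, J0_psiLW G K t, ?_⟩
  simp only [Qcas, LinearMap.add_apply, LinearMap.neg_apply, LinearMap.comp_apply,
    LinearMap.id_apply, map_add, Jm_Jp_psiLW, J0_psiLW, map_smul, smul_smul, ← add_smul,
    ← neg_smul]
  congr 1
  unfold qe
  ring

end
end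

section
/- Let γ ≥ 1/2 be a half-integer and j ∈ ℂ. The 2γ+1 complex numbers q_(μ) := −(j+μ)(j+μ+1), for μ ∈ {−γ, −γ+1, …, γ}, are pairwise distinct if and only if 2j ∉ ℤ, or 2j ∈ ℤ and (j > γ − 1 or j < −γ). -/
/-!
The difference of two values factors as q_(μ') - q_(μ) = (μ - μ')(2j + μ + μ' + 1), so a collision at
μ ≠ μ' means 2j = -(μ + μ') - 1 (`qval_eq_iff`). In terms of the indices t, t' ∈ {0, …, G} this
reads t + t' = G - 1 - 2j, which forces 2j = n ∈ ℤ. The sum of two distinct indices takes exactly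
the values 1, …, 2G - 1, so a collision exists iff -G ≤ n ≤ G - 2.
-/

/-!
Statement 2: distinctness of the values q_(μ) = -(j+μ)(j+μ+1), μ ∈ {-γ,...,γ}.

Conventions: γ = G/2 with `G : ℕ`, `1 ≤ G`; μ = t - γ for `t : Fin (G+1)`; j ∈ ℂ arbitrary.
"2j ∈ ℤ" is encoded as `∃ n : ℤ, 2 * j = n`; for such j (necessarily real with j = n/2),
"j > γ-1" is `(n : ℝ) > G - 2` and "j < -γ" is `(n : ℝ) < -G`.
-/

/-- q_(μ) = -(j+μ)(j+μ+1) with μ = t - γ, γ = G/2. -/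
noncomputable def qval (G : ℕ) (j : ℂ) (t : Fin (G + 1)) : ℂ :=
  -((j + (((t : ℕ) : ℂ) - (G : ℂ) / 2)) * ((j + (((t : ℕ) : ℂ) - (G : ℂ) / 2)) + 1))

theorem qval_eq_iff (G : ℕ) (j : ℂ) (t t' : Fin (G + 1)) :
    qval G j t = qval G j t' ↔
      t = t' ∨ 2 * j = (((G : ℤ) - 1 - (t : ℕ) - (t' : ℕ) : ℤ) : ℂ) := by
  have key : qval G j t' - qval G j t =
      (((t : ℕ) : ℂ) - ((t' : ℕ) : ℂ)) *
        (2 * j - (((G : ℤ) - 1 - (t : ℕ) - (t' : ℕ) : ℤ) : ℂ)) := by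
    unfold qval
    push_cast
    ring
  rw [eq_comm, ← sub_eq_zero, key, mul_eq_zero, sub_eq_zero, sub_eq_zero, Nat.cast_inj, Fin.ext_iff]

/-- The 2γ+1 values q_(μ), μ ∈ {-γ,...,γ}, are pairwise distinct iff
2j ∉ ℤ, or 2j ∈ ℤ and (j > γ-1 or j < -γ). -/
theorem qval_pairwise_distinct_iff (G : ℕ) (hG : 1 ≤ G) (j : ℂ) :
    (∀ t t' : Fin (G + 1), qval G j t = qval G j t' → t = t') ↔
      (¬ ∃ n : ℤ, 2 * j = (n : ℂ)) ∨
        ((∃ n : ℤ, 2 * j = (n : ℂ)) ∧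
          ∃ n : ℤ, 2 * j = (n : ℂ) ∧ ((n : ℝ) > (G : ℝ) - 2 ∨ (n : ℝ) < -(G : ℝ))) := by
  constructor
  · intro h
    by_cases hn : ∃ n : ℤ, 2 * j = (n : ℂ)
    · refine Or.inr ⟨hn, ?_⟩
      obtain ⟨n, hn⟩ := hn
      refine ⟨n, hn, ?_⟩
      by_contra hc
      rw [not_or, gt_iff_lt, not_lt, not_lt] at hc
      obtain ⟨h1, h2⟩ := hc
      have h1' : n ≤ (G : ℤ) - 2 := by exact_mod_cast h1
      have h2' : -(G : ℤ) ≤ n := by exact_mod_cast h2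
      -- The index sum s = G - 1 - n lies in [1, 2G - 1]: it is 0 + s if s ≤ G, else G + (s - G).
      obtain ⟨a, b, ha, hb, hab, hs⟩ : ∃ a b : ℕ, a < G + 1 ∧ b < G + 1 ∧ a ≠ b ∧
          n = (G : ℤ) - 1 - a - b := by
        by_cases hs : (G : ℤ) - 1 - n ≤ G
        · exact ⟨0, ((G : ℤ) - 1 - n).toNat, by omega, by omega, by omega, by omega⟩
        · exact ⟨G, (-1 - n).toNat, by omega, by omega, by omega, by omega⟩
      have := h ⟨a, ha⟩ ⟨b, hb⟩ ((qval_eq_iff G j _ _).2 (Or.inr (by rw [hn, hs])))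
      exact hab (Fin.ext_iff.1 this)
    · exact Or.inl hn
  · intro h t t' heq
    rcases (qval_eq_iff G j t t').1 heq with h0 | h0
    · exact h0
    · rcases h with h | ⟨-, n, hn, hlt⟩
      · exact absurd ⟨_, h0⟩ h
      · have hnn : n = (G : ℤ) - 1 - (t : ℕ) - (t' : ℕ) := by
          rw [hn] at h0
          exact_mod_cast h0
        have hlt' : n > (G : ℤ) - 2 ∨ n < -(G : ℤ) := by
          rcases hlt with h | h
          · exact Or.inl (by exact_mod_cast h)
          · exact Or.inr (by exact_mod_cast h)
        have := t.isLt
        have := t'.isLt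
        apply Fin.ext
        omega
end
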